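/- Assume condition (R). Then the radius of starlikeness r*(g_{γ,σ}(·;q)) = r*_0(g_{γ,σ}(·;q)) satisfies Γ_q(γ+3)/(3σ²Γ_q(γ+1)) < (r*(g_{γ,σ}(·;q)))² < 3Γ_q(γ+3)Γ_q(γ+5) / ( σ²(9Γ_q(γ+1)Γ_q(γ+5) − 10q²Γ_q(γ+3)²) ). -/

import Mathlib

noncomputable def qPochInf (a q : ℝ) : ℝ := ∏' k : ℕ, (1 - a * q ^ k)

noncomputable def qGamma (q x : ℝ) : ℝ :=
  qPochInf q q * (1 - q) ^ (1 - x) / qPochInf (q ^ x) q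

noncomputable def qML (γ σ q : ℝ) (z : ℂ) : ℂ :=
  ∑' n : ℕ,
    (((-1) ^ n * σ ^ (2 * n) * q ^ (n * (n - 1)) / qGamma q (2 * n + γ + 1) : ℝ) : ℂ) * z ^ (2 * n)

noncomputable def qMLR (γ σ q : ℝ) (x : ℝ) : ℝ :=
  ∑' n : ℕ,
    ((-1) ^ n * σ ^ (2 * n) * q ^ (n * (n - 1)) / qGamma q (2 * n + γ + 1)) * x ^ (2 * n)

def condR (q γ : ℝ) : Prop :=
  (γ = 0 ∨ γ = 1) ∨
    (γ ∈ Set.Ioo (0 : ℝ) 2 ∧ γ ≠ 1 ∧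
      1 < q⁻¹ * (1 - q) * (1 - q ^ (γ + 1)) * (1 - q ^ (γ + 2)))

noncomputable def radiusStarlike (α : ℝ) (f : ℂ → ℂ) : ℝ :=
  sSup {r : ℝ | 0 < r ∧ ∀ z : ℂ, 0 < ‖z‖ → ‖z‖ < r →
    α < (z * deriv f z / f z).re}

noncomputable def radiusConvex (α : ℝ) (f : ℂ → ℂ) : ℝ :=
  sSup {r : ℝ | 0 < r ∧ ∀ z : ℂ, ‖z‖ < r →
    α < (1 + z * deriv (deriv f) z / deriv f z).re}

noncomputable def fML (γ σ q : ℝ) (z : ℂ) : ℂ :=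
  Complex.exp ((1 / ((γ : ℂ) + 1)) *
    Complex.log (z ^ ((γ : ℂ) + 1) * (qGamma q (γ + 1) : ℂ) * qML γ σ q z))

noncomputable def gML (γ σ q : ℝ) (z : ℂ) : ℂ :=
  z * (qGamma q (γ + 1) : ℂ) * qML γ σ q z

noncomputable def hML (γ σ q : ℝ) (z : ℂ) : ℂ :=
  z * (qGamma q (γ + 1) : ℂ) *
    ∑' n : ℕ,
      (((-1) ^ n * σ ^ (2 * n) * q ^ (n * (n - 1)) / qGamma q (2 * n + γ + 1) : ℝ) : ℂ) * z ^ n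

noncomputable def hMLR (γ σ q : ℝ) (x : ℝ) : ℝ :=
  x * qGamma q (γ + 1) *
    ∑' n : ℕ,
      ((-1) ^ n * σ ^ (2 * n) * q ^ (n * (n - 1)) / qGamma q (2 * n + γ + 1)) * x ^ n


lemma polyA (c X s : ℝ) (h0 : 0 ≤ c) (h1 : c ≤ 2/5) (hs : X^2 ≤ s) (hs1 : s ≤ 1) :
   3/10*c ≤ 1 + s/3 - 4*X/3 + c*(4*X^2/3 - 2*s/3 - 8*s*X/27) := by
  have hX1 : X ≤ 1 := by nlinarith
  have hX2 : -1 ≤ X := by nlinarith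
  have p0 : 0 ≤ 1 + s/3 - 4*X/3 := by nlinarith
  have p1 : 0 ≤ 1 + s/3 - 4*X/3 + 2/5*(4*X^2/3 - 2*s/3 - 8*s*X/27 - 3/10) := by
    rcases le_total X (9/16) with h | h
    · nlinarith [mul_nonneg (sub_nonneg.2 hs) (sub_nonneg.2 h), mul_nonneg (sub_nonneg.2 h) (sq_nonneg X)]
    · nlinarith [mul_nonneg (sub_nonneg.2 hs1) (sub_nonneg.2 h)]
  nlinarith [mul_nonneg h0 p1, mul_nonneg (sub_nonneg.2 h1) p0]

/-- power series with real coefficients -/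
noncomputable def SS (d : ℕ → ℝ) (w : ℂ) : ℂ := ∑' n : ℕ, (d n : ℂ) * w ^ n

lemma SS_summable (d : ℕ → ℝ) (hd : Summable fun n => |d n|) (w : ℂ) (hw : ‖w‖ ≤ 1) :
    Summable fun n => (d n : ℂ) * w ^ n := by
  refine Summable.of_norm_bounded hd fun n => ?_
  rw [norm_mul, norm_pow, Complex.norm_real, Real.norm_eq_abs]
  exact mul_le_of_le_one_right (abs_nonneg _) (pow_le_one₀ (norm_nonneg _) hw)

lemma SS_cont (d : ℕ → ℝ) (hd : Summable fun n => |d n|) :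
    ContinuousOn (SS d) (Metric.closedBall 0 1) := by
  unfold SS
  refine continuousOn_tsum (fun i => by fun_prop) hd fun n w hw => ?_
  rw [norm_mul, norm_pow, Complex.norm_real, Real.norm_eq_abs]
  exact mul_le_of_le_one_right (abs_nonneg _) (pow_le_one₀ (norm_nonneg _) (by simpa using hw))

lemma SS_real (d : ℕ → ℝ) (x : ℝ) : SS d (x : ℂ) = ((∑' n, d n * x ^ n : ℝ) : ℂ) := by
  unfold SS
  push_cast
  rfl

lemma SS_im (d : ℕ → ℝ) (x : ℝ) : (SS d (x : ℂ)).im = 0 := by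
  rw [SS_real]; simp

lemma SS_tail (d : ℕ → ℝ) (hd : Summable fun n => |d n|) (k : ℕ) (ρ r : ℝ) (hρ : 0 ≤ ρ)
    (hr : ∀ n, k ≤ n → |d (n+1)| ≤ ρ * |d n|) (w : ℂ) (hw : ‖w‖ ≤ r) (hr1 : r ≤ 1)
    (hρr : ρ * r < 1) :
    ‖SS d w - ∑ i ∈ Finset.range k, (d i : ℂ) * w ^ i‖ ≤ |d k| * r ^ k / (1 - ρ * r) := by
  have hr0 : 0 ≤ r := (norm_nonneg _).trans hw
  have e : SS d w - ∑ i ∈ Finset.range k, (d i : ℂ) * w ^ i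
      = ∑' i, (d (i + k) : ℂ) * w ^ (i + k) := by
    unfold SS
    rw [← (SS_summable d hd w (hw.trans hr1)).sum_add_tsum_nat_add k]
    ring
  rw [e]
  have hg := (hasSum_geometric_of_lt_one (mul_nonneg hρ hr0) hρr).mul_left (|d k| * r ^ k)
  rw [← div_eq_mul_inv] at hg
  refine tsum_of_norm_bounded hg fun i => ?_
  have hi : |d (i + k)| ≤ ρ ^ i * |d k| := by
    induction i with
    | zero => simp
    | succ i ih =>
      have := hr (i + k) (by omega)
      rw [show i + 1 + k = i + k + 1 by ring, pow_succ]
      nlinarith [mul_le_mul_of_nonneg_left ih hρ]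
  rw [norm_mul, norm_pow, Complex.norm_real, Real.norm_eq_abs]
  calc |d (i+k)| * ‖w‖ ^ (i+k) ≤ (ρ ^ i * |d k|) * r ^ (i+k) := by gcongr
    _ = _ := by rw [pow_add, mul_pow]; ring

structure Good (β : ℕ → ℝ) : Prop where
  h0 : β 0 = 1
  h1 : β 1 = 1
  hp : ∀ n, 0 < β n
  h2 : β 2 ≤ 2/5
  hr : ∀ n, 2 ≤ n → β (n+1) ≤ β n / 4

def dF (β : ℕ → ℝ) (n : ℕ) : ℝ := (-1)^n * β n
def dG (β : ℕ → ℝ) (n : ℕ) : ℝ := (-1)^n * ((2*n+1) * β n)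

lemma dF_abs {β : ℕ → ℝ} (h : Good β) (n : ℕ) : |dF β n| = β n := by
  rw [dF, abs_mul, abs_pow, abs_neg, abs_one, one_pow, one_mul, abs_of_pos (h.hp n)]

lemma dG_abs {β : ℕ → ℝ} (h : Good β) (n : ℕ) : |dG β n| = (2*n+1) * β n := by
  have := h.hp n
  rw [dG, abs_mul, abs_pow, abs_neg, abs_one, one_pow, one_mul, abs_of_pos (by positivity)]

lemma dG_ratio {β : ℕ → ℝ} (h : Good β) (n : ℕ) (hn : 3 ≤ n) :
    |dG β (n+1)| ≤ 9/28 * |dG β n| := by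
  rw [dG_abs h, dG_abs h]
  have h1 := h.hr n (by omega)
  have h2 := h.hp n
  have h3 : (3:ℝ) ≤ n := by exact_mod_cast hn
  push_cast
  calc (2*((n:ℝ)+1)+1) * β (n+1) ≤ (2*((n:ℝ)+1)+1) * (β n / 4) := by gcongr
    _ ≤ _ := by nlinarith

lemma dF_ratio {β : ℕ → ℝ} (h : Good β) (n : ℕ) (hn : 3 ≤ n) :
    |dF β (n+1)| ≤ 1/4 * |dF β n| := by
  rw [dF_abs h, dF_abs h]
  have h1 := h.hr n (by omega)
  linarith

lemma dG_summable {β : ℕ → ℝ} (h : Good β) : Summable fun n => |dG β n| := by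
  refine summable_of_ratio_norm_eventually_le (r := 9/28) (by norm_num) ?_
  filter_upwards [Filter.eventually_ge_atTop 3] with n hn
  simpa using dG_ratio h n hn

lemma dF_summable {β : ℕ → ℝ} (h : Good β) : Summable fun n => |dF β n| := by
  refine summable_of_ratio_norm_eventually_le (r := 1/4) (by norm_num) ?_
  filter_upwards [Filter.eventually_ge_atTop 3] with n hn
  simpa using dF_ratio h n hn

lemma core1 {β : ℕ → ℝ} (h : Good β) (w : ℂ) (hw : ‖w‖ ≤ 1/3) :
    0 < (SS (dG β) w * (starRingEnd ℂ) (SS (dF β) w)).re := by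
  have tF := SS_tail (dF β) (dF_summable h) 3 (1/4) (1/3) (by norm_num) (dF_ratio h) w hw
    (by norm_num) (by norm_num)
  have tG := SS_tail (dG β) (dG_summable h) 3 (9/28) (1/3) (by norm_num) (dG_ratio h) w hw
    (by norm_num) (by norm_num)
  rw [dF_abs h] at tF
  rw [dG_abs h] at tG
  have h3 := h.hr 2 le_rfl
  have hc0 := h.hp 2
  have hc := h.h2
  simp only [Finset.sum_range_succ, Finset.sum_range_zero, dF, dG, h.h0, h.h1] at tF tG
  set c := β 2 with hcdef
  norm_num at tF tG
  change ‖SS (dF β) w - (1 + -w + (c:ℂ) * w ^ 2)‖ ≤ _ at tF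
  change ‖SS (dG β) w - (1 + -(3*w) + 5 * (c:ℂ) * w ^ 2)‖ ≤ _ at tG
  set P : ℂ := 1 + -w + (c:ℂ) * w ^ 2 with hP
  set Q : ℂ := 1 + -(3*w) + 5 * (c:ℂ) * w ^ 2 with hQ
  set a : ℂ := SS (dF β) w - P with ha
  set b : ℂ := SS (dG β) w - Q with hb
  have eF : SS (dF β) w = P + a := by rw [ha]; ring
  have eG : SS (dG β) w = Q + b := by rw [hb]; ring
  have ha' : ‖a‖ ≤ 1/90 * c := by norm_num at h3; linarith
  have hb' : ‖b‖ ≤ 3/40 * c := by norm_num at h3; linarith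
  have hw2 : ‖w‖^2 ≤ 1/9 := by nlinarith [norm_nonneg w]
  have nP : ‖P‖ ≤ 7/5 := by
    calc ‖P‖ ≤ ‖(1:ℂ)‖ + ‖-w‖ + ‖(c:ℂ) * w^2‖ := norm_add₃_le
      _ = 1 + ‖w‖ + c * ‖w‖^2 := by simp [abs_of_pos hc0]
      _ ≤ _ := by nlinarith
  have nQ : ‖Q‖ ≤ 9/4 := by
    calc ‖Q‖ ≤ ‖(1:ℂ)‖ + ‖-(3*w)‖ + ‖5 * (c:ℂ) * w^2‖ := norm_add₃_le
      _ = 1 + 3*‖w‖ + 5*c * ‖w‖^2 := by simp [abs_of_pos hc0]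
      _ ≤ _ := by nlinarith
  have main : 3/10*c ≤ (Q * (starRingEnd ℂ) P).re := by
    have hs : w.re^2 + w.im^2 ≤ 1/9 := by
      rw [← Complex.normSq_eq_norm_sq, Complex.normSq_apply] at hw2
      nlinarith
    have := polyA c (3*w.re) (9*(w.re^2+w.im^2)) hc0.le hc (by nlinarith [sq_nonneg w.im])
      (by linarith)
    have e : (Q * (starRingEnd ℂ) P).re = 1 + 9*(w.re^2+w.im^2)/3 - 4*(3*w.re)/3
        + c*(4*(3*w.re)^2/3 - 2*(9*(w.re^2+w.im^2))/3 - 8*(9*(w.re^2+w.im^2))*(3*w.re)/27)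
        + 5*c^2*(w.re^2+w.im^2)^2 := by
      simp [hP, hQ, Complex.mul_re, Complex.mul_im, pow_two]
      ring
    rw [e]
    have : 0 ≤ 5*c^2*(w.re^2+w.im^2)^2 := by positivity
    linarith
  have key : (SS (dG β) w * (starRingEnd ℂ) (SS (dF β) w)).re
      = (Q * (starRingEnd ℂ) P).re + (Q * (starRingEnd ℂ) a + b * (starRingEnd ℂ) P
        + b * (starRingEnd ℂ) a).re := by
    rw [eF, eG, ← Complex.add_re]; congr 1; rw [map_add]; ring
  have err : ‖Q * (starRingEnd ℂ) a + b * (starRingEnd ℂ) P + b * (starRingEnd ℂ) a‖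
      ≤ 9/4 * (1/90*c) + 3/40*c*(7/5) + 3/40*c*(1/90*c) := by
    refine norm_add₃_le.trans ?_
    simp only [norm_mul, RCLike.norm_conj]
    gcongr
  have := (abs_le.1 (Complex.abs_re_le_norm (Q * (starRingEnd ℂ) a + b * (starRingEnd ℂ) P
        + b * (starRingEnd ℂ) a))).1
  rw [key]
  nlinarith

lemma core2 {β : ℕ → ℝ} (h : Good β) (x : ℝ)
    (hx : x = (1 + 2*(5*β 2/9) + 2*(5*β 2/9)^2)/3) :
    0 ≤ x ∧ x < 1 ∧ (SS (dG β) (x:ℂ)).re ≤ 0 := by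
  have h3 := h.hp 3
  have h4 := h.hr 3 (by norm_num)
  have hc0 := h.hp 2
  have hc := h.h2
  have hx0 : 0 ≤ x := by rw [hx]; positivity
  have hx1 : x < 1 := by nlinarith
  refine ⟨hx0, hx1, ?_⟩
  have tG := SS_tail (dG β) (dG_summable h) 4 (9/28) x (by norm_num)
    (fun n hn => dG_ratio h n (by omega)) x (by simp [abs_of_nonneg hx0]) hx1.le (by linarith)
  rw [dG_abs h] at tG
  have hre := (abs_le.1 ((Complex.abs_re_le_norm _).trans tG)).2
  have e : ∑ i ∈ Finset.range 4, (dG β i : ℂ) * (x:ℂ) ^ i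
      = ((1 - 3*x + 5*β 2*x^2 - 7*β 3*x^3 : ℝ) : ℂ) := by
    simp only [Finset.sum_range_succ, Finset.sum_range_zero, dG, h.h0, h.h1]
    push_cast
    norm_num
    ring
  rw [e, Complex.sub_re, Complex.ofReal_re] at hre
  have hq : 1 - 3*x + 5*β 2*x^2 ≤ 0 := by
    have hb0 : 0 ≤ 5*β 2/9 := by positivity
    have hb1 : 5*β 2/9 ≤ 2/9 := by linarith
    have e5 : 5 * β 2 = 9 * (5 * β 2/9) := by ring
    rw [e5, hx]
    generalize 5*β 2/9 = b at *
    have : 1 - 3*((1 + 2*b + 2*b^2)/3) + 9*b*((1 + 2*b + 2*b^2)/3)^2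
      = b*(-2 - 2*b + (1+2*b+2*b^2)^2) := by ring
    rw [this]
    refine mul_nonpos_of_nonneg_of_nonpos hb0 ?_
    have : 1+2*b+2*b^2 ≤ 125/81 := by nlinarith
    nlinarith
  have ht : (2*((4:ℕ):ℝ)+1) * β 4 * x^4 / (1 - 9/28*x) ≤ 7*β 3*x^3 := by
    rw [div_le_iff₀ (by linarith)]
    have : x^3 * (β 3/4) ≥ x^3 * β 4 := by gcongr
    have h33 : 0 ≤ x^3 * β 3 := by positivity
    push_cast
    nlinarith [mul_nonneg hx0 h33, mul_nonneg (sub_nonneg.2 hx1.le) h33,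
      mul_le_mul_of_nonneg_left this hx0]
  linarith

lemma rad_aux {β : ℕ → ℝ} (h : Good β) (B : ℝ) (hB : 0 < B) (f : ℂ → ℂ)
    (hf : f = fun z => ∑' n, ((dF β n * B ^ n : ℝ) : ℂ) * z ^ (2*n+1)) (z : ℂ)
    (hz : B * ‖z‖^2 < 1) :
    f z = z * SS (dF β) (B * z^2) ∧ deriv f z = SS (dG β) (B * z^2) := by
  constructor
  · rw [hf, SS, ← tsum_mul_left]
    refine tsum_congr fun n => ?_
    push_cast
    rw [mul_pow, ← pow_mul]; ring
  · have hU : IsOpen {z : ℂ | B * ‖z‖^2 < 1} := isOpen_lt (by fun_prop) (by fun_prop)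
    have := Complex.hasSum_deriv_of_summable_norm
      (F := fun n z => ((dF β n * B ^ n : ℝ) : ℂ) * z ^ (2*n+1))
      (U := {z : ℂ | B * ‖z‖^2 < 1}) (z := z)
      ((dF_summable h).mul_right (1 + 1/B)) (fun i => by fun_prop) hU ?_ hz
    · rw [hf, ← this.tsum_eq, SS]
      refine tsum_congr fun n => ?_
      simp only [deriv_const_mul_field, deriv_pow_field]
      simp only [dF, dG]
      push_cast
      rw [mul_pow, ← pow_mul]
      ring
    · intro i w hw
      simp only [Set.mem_ofPred_eq] at hw
      have e : ‖((dF β i * B ^ i : ℝ) : ℂ) * w ^ (2*i+1)‖ = |dF β i| * ((B * ‖w‖^2)^i * ‖w‖) := by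
        rw [norm_mul, norm_pow, Complex.norm_real, Real.norm_eq_abs, abs_mul, abs_pow,
          abs_of_pos hB, mul_pow, ← pow_mul, pow_succ]; ring
      rw [e]
      have h1 : (B * ‖w‖^2)^i ≤ 1 := pow_le_one₀ (by positivity) hw.le
      have h2 : ‖w‖ ≤ 1 + 1/B := by
        have : ‖w‖^2 < 1/B := by rw [lt_div_iff₀ hB]; linarith
        nlinarith [sq_nonneg (‖w‖ - 1)]
      gcongr
      calc _ ≤ 1 * ‖w‖ := by gcongr
        _ ≤ _ := by linarith

lemma rad {β : ℕ → ℝ} (h : Good β) (B : ℝ) (hB : 0 < B) (f : ℂ → ℂ)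
    (hf : f = fun z => ∑' n, ((dF β n * B ^ n : ℝ) : ℂ) * z ^ (2*n+1)) (x : ℝ)
    (hx : x = (1 + 2*(5*β 2/9) + 2*(5*β 2/9)^2)/3) :
    1/(3*B) < radiusStarlike 0 f ^ 2 ∧ radiusStarlike 0 f ^ 2 ≤ x / B := by
  obtain ⟨hx0, hx1, hxG⟩ := core2 h x hx
  have hxpos : 0 < x := by have := h.hp 2; rw [hx]; positivity
  have cF := SS_cont _ (dF_summable h)
  have cG := SS_cont _ (dG_summable h)
  have aux := rad_aux h B hB f hf
  -- quotient
  have hquot : ∀ z : ℂ, z ≠ 0 → B * ‖z‖^2 < 1 →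
      (z * deriv f z / f z).re = (SS (dG β) (B*z^2) / SS (dF β) (B*z^2)).re := by
    intro z hz hz1
    rw [(aux z hz1).1, (aux z hz1).2, mul_div_mul_left _ _ hz]
  set S := {r : ℝ | 0 < r ∧ ∀ z : ℂ, 0 < ‖z‖ → ‖z‖ < r → 0 < (z * deriv f z / f z).re} with hS
  have hrad : radiusStarlike 0 f = sSup S := rfl
  -- upper bound
  have hub : ∀ r ∈ S, r ≤ √(x / B) := by
    rintro r ⟨hr0, hr⟩
    by_contra! hlt
    have hpos : ∀ t : ℝ, 0 < t → t ≤ x → 0 < (SS (dG β) (t:ℂ) / SS (dF β) (t:ℂ)).re := by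
      intro t ht htx
      have hn : ‖((√(t/B) : ℝ) : ℂ)‖ = √(t/B) := by
        rw [Complex.norm_real, Real.norm_eq_abs, abs_of_nonneg (Real.sqrt_nonneg _)]
      have hp : 0 < √(t/B) := Real.sqrt_pos.2 (by positivity)
      have hsq : B * √(t/B)^2 = t := by
        rw [Real.sq_sqrt (by positivity)]; field_simp
      have h1 := hr ((√(t/B) : ℝ) : ℂ) (by rw [hn]; exact hp) (by
        rw [hn]; refine lt_of_le_of_lt (Real.sqrt_le_sqrt ?_) hlt; gcongr)
      rw [hquot _ (by exact_mod_cast hp.ne') (by rw [hn, hsq]; linarith)] at h1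
      rw [← Complex.ofReal_pow, ← Complex.ofReal_mul, hsq] at h1
      exact h1
    have hdiv : ∀ t : ℝ, (SS (dG β) (t:ℂ) / SS (dF β) (t:ℂ)).re
        = (SS (dG β) (t:ℂ)).re / (SS (dF β) (t:ℂ)).re := by
      intro t
      rw [SS_real, SS_real, ← Complex.ofReal_div]
      simp
    have hne : ∀ t ∈ Set.Icc 0 x, (SS (dF β) (t:ℂ)).re ≠ 0 := by
      rintro t ⟨ht0, htx⟩ h0
      rcases ht0.eq_or_lt with rfl | ht
      · have : SS (dF β) ((0:ℝ):ℂ) = 1 := by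
          rw [SS, tsum_eq_single 0]
          · simp [dF, h.h0]
          · intro n hn; simp [hn]
        rw [this] at h0; simp at h0
      · have := hpos t ht htx
        rw [hdiv, h0] at this
        simp at this
    have h00 : SS (dF β) ((0:ℝ):ℂ) = 1 := by
      rw [SS, tsum_eq_single 0]
      · simp [dF, h.h0]
      · intro n hn; simp [hn]
    have hcont : ContinuousOn (fun t : ℝ => (SS (dF β) (t:ℂ)).re) (Set.Icc 0 x) := by
      refine Complex.continuous_re.comp_continuousOn (cF.comp (by fun_prop) ?_)
      intro t ht
      simp [abs_of_nonneg ht.1]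
      linarith [ht.2]
    have hFpos : 0 < (SS (dF β) (x:ℂ)).re := by
      by_contra! hneg
      obtain ⟨t, ht, h0⟩ := intermediate_value_Icc' hx0 hcont
        (show (0:ℝ) ∈ Set.Icc _ _ from ⟨hneg, by simp only [h00]; simp⟩)
      exact hne t ht h0
    have := hpos x hxpos le_rfl
    rw [hdiv] at this
    exact absurd this (not_lt.2 (div_nonpos_of_nonpos_of_nonneg hxG hFpos.le))
  have hbdd : BddAbove S := ⟨_, hub⟩
  -- lower bound
  obtain ⟨ρ, hρ, hρS⟩ : ∃ ρ, 1/(3*B) < ρ ∧ √ρ ∈ S := by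
    set T : Set ℂ := Metric.ball 0 1 ∩ (fun w => (SS (dG β) w *
      (starRingEnd ℂ) (SS (dF β) w)).re) ⁻¹' Set.Ioi 0 with hT
    have hTo : IsOpen T := by
      refine ContinuousOn.isOpen_inter_preimage ?_ Metric.isOpen_ball isOpen_Ioi
      refine Complex.continuous_re.comp_continuousOn
        ((cG.mul (Complex.continuous_conj.comp_continuousOn cF)).mono Metric.ball_subset_closedBall)
    have hsub : Metric.closedBall (0:ℂ) (1/3) ⊆ T := by
      intro w hw
      have hw : ‖w‖ ≤ 1/3 := by simpa using hw
      refine ⟨?_, core1 h w hw⟩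
      simp; linarith
    obtain ⟨δ, hδ, hδT⟩ := (isCompact_closedBall (0:ℂ) (1/3)).exists_thickening_subset_open hTo hsub
    rw [thickening_closedBall hδ (by norm_num)] at hδT
    refine ⟨(δ + 1/3)/B, ?_, Real.sqrt_pos.2 (by positivity), ?_⟩
    · rw [div_lt_div_iff₀ (by positivity) hB]; nlinarith [mul_pos hδ hB]
    · intro z hz hzr
      have hz2 : B * ‖z‖^2 < δ + 1/3 := by
        have := (Real.lt_sqrt (norm_nonneg z)).1 hzr
        rw [lt_div_iff₀ hB] at this; linarith
      have hnorm : ‖(B:ℂ) * z^2‖ = B * ‖z‖^2 := by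
        rw [norm_mul, norm_pow, Complex.norm_real, Real.norm_eq_abs, abs_of_pos hB]
      have hmem : (B:ℂ) * z^2 ∈ T := hδT (by rw [mem_ball_zero_iff, hnorm]; exact hz2)
      have hlt1 : B * ‖z‖^2 < 1 := by
        have := hmem.1; rwa [mem_ball_zero_iff, hnorm] at this
      rw [hquot z (norm_pos_iff.1 hz) hlt1]
      have hre : 0 < (SS (dG β) (B*z^2) * (starRingEnd ℂ) (SS (dF β) (B*z^2))).re := hmem.2
      have hF0 : SS (dF β) (B*z^2) ≠ 0 := by
        intro h0; rw [h0] at hre; simp at hre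
      have e : (SS (dG β) (B*z^2) / SS (dF β) (B*z^2)).re
          = (SS (dG β) (B*z^2) * (starRingEnd ℂ) (SS (dF β) (B*z^2))).re
            / Complex.normSq (SS (dF β) (B*z^2)) := by
        rw [Complex.div_re, Complex.mul_re, Complex.conj_re, Complex.conj_im]
        ring
      rw [e]
      exact div_pos hre (Complex.normSq_pos.2 hF0)
  have hρ0 : 0 < ρ := lt_trans (by positivity) hρ
  have hle : √ρ ≤ sSup S := le_csSup hbdd hρS
  have hsup : sSup S ≤ √(x/B) := csSup_le ⟨_, hρS⟩ hub
  rw [hrad]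
  constructor
  · calc 1/(3*B) < ρ := hρ
      _ = √ρ^2 := (Real.sq_sqrt hρ0.le).symm
      _ ≤ _ := by gcongr
  · calc sSup S ^2 ≤ √(x/B)^2 := by
          have := (Real.sqrt_nonneg ρ).trans hle
          gcongr
      _ = _ := Real.sq_sqrt (by positivity)

lemma poch_ne (a q : ℝ) (hq0 : 0 < q) (hq1 : q < 1) (ha0 : 0 < a) (ha1 : a < 1) :
    qPochInf a q ≠ 0 := by
  unfold qPochInf
  simp only [sub_eq_add_neg]
  refine tprod_one_add_ne_zero_of_summable (f := fun k => -(a * q^k)) (fun i => ?_) ?_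
  · have : a * q^i ≤ a := mul_le_of_le_one_right ha0.le (pow_le_one₀ hq0.le hq1.le)
    intro h; linarith
  · exact ((summable_geometric_of_lt_one hq0.le hq1).mul_left a).neg.norm

lemma poch_rec (a q : ℝ) (hq0 : 0 < q) (hq1 : q < 1) :
    qPochInf a q = (1 - a) * qPochInf (a * q) q := by
  unfold qPochInf
  rw [tprod_eq_zero_mul']
  · simp only [pow_zero, mul_one]
    congr 2; ext k; rw [pow_succ]; ring
  · simp only [sub_eq_add_neg]
    refine Real.multipliable_one_add_of_summable (f := fun k => -(a * q^(k+1))) ?_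
    exact (((summable_nat_add_iff 1).2 (summable_geometric_of_lt_one hq0.le hq1)).mul_left a).neg

lemma qGamma_ne (q x : ℝ) (hq0 : 0 < q) (hq1 : q < 1) (hx : 0 < x) : qGamma q x ≠ 0 := by
  unfold qGamma
  have h1 := poch_ne q q hq0 hq1 hq0 hq1
  have h2 := poch_ne (q^x) q hq0 hq1 (Real.rpow_pos_of_pos hq0 _)
    (Real.rpow_lt_one hq0.le hq1 hx)
  have h3 : (1-q)^(1-x) ≠ 0 := (Real.rpow_pos_of_pos (by linarith) _).ne'
  exact div_ne_zero (mul_ne_zero h1 h3) h2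

lemma qGamma_rec (q x : ℝ) (hq0 : 0 < q) (hq1 : q < 1) (hx : 0 < x) :
    qGamma q (x+1) = qGamma q x * (1 - q^x) / (1-q) := by
  have h2 := poch_ne (q^x) q hq0 hq1 (Real.rpow_pos_of_pos hq0 _)
    (Real.rpow_lt_one hq0.le hq1 hx)
  have h3 := poch_rec (q^x) q hq0 hq1
  have e : q^x * q = q^(x+1) := by rw [Real.rpow_add hq0, Real.rpow_one]
  rw [e] at h3
  have h4 : 1 - q^x ≠ 0 := by
    have := Real.rpow_lt_one hq0.le hq1 hx; intro h; linarith
  have h5 : qPochInf (q^(x+1)) q ≠ 0 := by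
    intro h; rw [h, mul_zero] at h3; exact h2 h3
  have h6 : (1-q)^(1-x) = (1-q)^(1-(x+1)) * (1-q) := by
    nth_rewrite 3 [← Real.rpow_one (1-q)]
    rw [← Real.rpow_add (by linarith)]; congr 1; ring
  have h7 : 1 - q ≠ 0 := by linarith
  unfold qGamma
  rw [h3, h6]
  field_simp

lemma polyB4 (q y : ℝ) (hq0 : 0 < q) (hq1 : q < 1) (hy : q^4 ≤ y) :
    q^2 * (1 - y) ≤ 1/2 * (1 - y*q^4) := by
  have : 0 ≤ (1-q^4)*(1-q^2)^2 := by
    have : q^4 ≤ 1 := pow_le_one₀ hq0.le hq1.le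
    exact mul_nonneg (by linarith) (sq_nonneg _)
  have h2 : 0 ≤ (y - q^4) * (2*q^2 - q^4) := by
    have : q^2 ≤ 1 := pow_le_one₀ hq0.le hq1.le
    refine mul_nonneg (by linarith) ?_
    nlinarith [sq_nonneg q]
  nlinarith

lemma polyC4 (q y : ℝ) (hq0 : 0 < q) (hq1 : q < 1) (hy : q^4 ≤ y) :
    q * (1 - y) ≤ 2/3 * (1 - y*q^2) := by
  have : 0 ≤ (1-q^2)*((1-q)^2*(2+q+2*q^2)) := by
    have : q^2 ≤ 1 := pow_le_one₀ hq0.le hq1.le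
    exact mul_nonneg (by linarith) (by positivity)
  have h2 : 0 ≤ (y - q^4) * (3*q - 2*q^2) := by
    refine mul_nonneg (by linarith) ?_
    nlinarith
  nlinarith

lemma polyC3 (q y : ℝ) (hq0 : 0 < q) (hq1 : q < 1) (hy : q^3 ≤ y) :
    q * (1 - y) ≤ 3/5 * (1 - y*q^2) := by
  have : 0 ≤ (1-q)^3*(3+4*q+3*q^2) := by
    have : 0 < 1 - q := by linarith
    positivity
  have h2 : 0 ≤ (y - q^3) * (5*q - 3*q^2) := by
    refine mul_nonneg (by linarith) ?_
    nlinarith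
  nlinarith

theorem stmt10 (q σ γ : ℝ) (hq0 : 0 < q) (hq1 : q < 1) (hσ : 0 < σ)
    (hγ0 : 0 ≤ γ) (hγ2 : γ < 2) (hR : condR q γ) :
    qGamma q (γ + 3) / (3 * σ ^ 2 * qGamma q (γ + 1)) <
      radiusStarlike 0 (gML γ σ q) ^ 2 ∧
    radiusStarlike 0 (gML γ σ q) ^ 2 <
      3 * qGamma q (γ + 3) * qGamma q (γ + 5) /
        (σ ^ 2 * (9 * qGamma q (γ + 1) * qGamma q (γ + 5) -
          10 * q ^ 2 * qGamma q (γ + 3) ^ 2)) := by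
  have hG1 := qGamma_ne q (γ+1) hq0 hq1 (by linarith)
  have hG3 := qGamma_ne q (γ+3) hq0 hq1 (by linarith)
  have hG5 := qGamma_ne q (γ+5) hq0 hq1 (by linarith)
  have hGn : ∀ n : ℕ, qGamma q (2*n+γ+1) ≠ 0 := fun n => qGamma_ne q _ hq0 hq1 (by positivity)
  have h1q : 0 < 1 - q := by linarith
  -- D
  set y := q^(γ+1) with hy
  have hy0 : 0 < y := Real.rpow_pos_of_pos hq0 _
  have hy1 : y < 1 := Real.rpow_lt_one hq0.le hq1 (by linarith)
  have hy3 : q^3 ≤ y := by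
    rw [hy, ← Real.rpow_natCast]
    exact Real.rpow_le_rpow_of_exponent_ge hq0 hq1.le (by push_cast; linarith)
  have hrec : ∀ n : ℕ, qGamma q (2*(n+1:ℕ)+γ+1) =
      qGamma q (2*n+γ+1) * ((1 - y*q^(2*n)) * (1 - y*q^(2*n+1))) / (1-q)^2 := by
    intro n
    have e1 : y * q^(2*n) = q^(2*n+γ+1 : ℝ) := by
      rw [hy, ← Real.rpow_natCast, ← Real.rpow_add hq0]; congr 1; push_cast; ring
    have e2 : y * q^(2*n+1) = q^(2*n+γ+1+1 : ℝ) := by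
      rw [hy, ← Real.rpow_natCast, ← Real.rpow_add hq0]; congr 1; push_cast; ring
    rw [show (2*((n+1:ℕ):ℝ)+γ+1) = 2*n+γ+1+1+1 by push_cast; ring,
      qGamma_rec q _ hq0 hq1 (by positivity), qGamma_rec q _ hq0 hq1 (by positivity), e1, e2]
    field_simp
  have hD : ∀ n : ℕ, 0 < 1 - y*q^n := by
    intro n
    have : y * q^n ≤ y := mul_le_of_le_one_right hy0.le (pow_le_one₀ hq0.le hq1.le)
    linarith
  have hD1 : 0 < 1 - y := by linarith
  have hD2 : 0 < 1 - y*q := by simpa using hD 1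
  set B := σ^2*(1-q)^2/((1-y)*(1-y*q)) with hBdef
  have hB : 0 < B := by positivity
  set β : ℕ → ℝ := fun n => qGamma q (γ+1) * (σ^(2*n) * q^(n*(n-1)) / qGamma q (2*n+γ+1)) / B^n
    with hβ
  have hβ0 : β 0 = 1 := by simp [hβ, hG1]
  have hβr : ∀ n, β (n+1) = β n * (q^(2*n) * ((1-y)*(1-y*q)) / ((1 - y*q^(2*n)) * (1 - y*q^(2*n+1)))) := by
    intro n
    have a1 := hGn n
    have a2 := (hD (2*n)).ne'
    have a3 := (hD (2*n+1)).ne'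
    have a4 : (n+1)*(n+1-1) = n*(n-1) + 2*n := by
      cases n with
      | zero => rfl
      | succ m => simp only [Nat.add_sub_cancel]; ring
    simp only [hβ]
    rw [hrec, a4, pow_add q, pow_succ B, show 2*(n+1) = 2*n+2 by ring, pow_add σ]
    have hBe : B * ((1-y)*(1-y*q)) = σ^2*(1-q)^2 := by
      rw [hBdef]; exact div_mul_cancel₀ _ (mul_pos hD1 hD2).ne'
    have hbn : B^n ≠ 0 := by positivity
    generalize B^n = Bn at *
    generalize σ^(2*n) = s at *
    have hBe' : σ^2 = B * ((1-y)*(1-y*q)) / (1-q)^2 := by rw [hBe]; field_simp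
    rw [hBe']
    field_simp
  have hg : Good β := by
    refine ⟨hβ0, ?_, ?_, ?_, ?_⟩
    · rw [hβr 0, hβ0]; simp [hD1.ne', hD2.ne']
    · intro n
      induction n with
      | zero => rw [hβ0]; norm_num
      | succ n ih =>
        rw [hβr]
        have := hD (2*n); have := hD (2*n+1)
        positivity
    · have e1 : β 1 = 1 := by rw [hβr 0, hβ0]; simp [hD1.ne', hD2.ne']
      rw [hβr 1, e1, one_mul, div_le_iff₀ (mul_pos (hD _) (hD _))]
      have c3 := polyC3 q y hq0 hq1 hy3
      have c4 := polyC4 q (y*q) hq0 hq1 (by nlinarith)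
      calc q^(2*1)*((1-y)*(1-y*q)) = (q*(1-y))*(q*(1-y*q)) := by ring
        _ ≤ (3/5 * (1 - y*q^2)) * (2/3 * (1 - y*q*q^2)) := by
            have := hD 2
            gcongr
        _ = _ := by ring
    · intro n hn
      have hb : 0 < β n := by
        clear hn
        induction n with
        | zero => rw [hβ0]; norm_num
        | succ n ih =>
          rw [hβr]
          have := hD (2*n); have := hD (2*n+1)
          positivity
      rw [hβr n, div_eq_mul_one_div (β n)]
      refine mul_le_mul_of_nonneg_left ?_ hb.le
      rw [div_le_iff₀ (mul_pos (hD _) (hD _))]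
      have c3 := polyB4 q y hq0 hq1 (by nlinarith [pow_pos hq0 3])
      have c4 := polyB4 q (y*q) hq0 hq1 (by nlinarith)
      have m1 : q^(2*n) ≤ q^4 := pow_le_pow_of_le_one hq0.le hq1.le (by omega)
      have m2 : q^(2*n+1) ≤ q^5 := pow_le_pow_of_le_one hq0.le hq1.le (by omega)
      have := hD 4
      have := hD 5
      have := hD (2*n)
      calc q^(2*n)*((1-y)*(1-y*q)) ≤ q^4*((1-y)*(1-y*q)) := by gcongr
        _ = (q^2*(1-y))*(q^2*(1-y*q)) := by ring
        _ ≤ (1/2 * (1 - y*q^4)) * (1/2 * (1 - y*q*q^4)) := by gcongr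
        _ = 1/4 * ((1-y*q^4)*(1-y*q^5)) := by ring
        _ ≤ _ := by gcongr
  have hfun : gML γ σ q = fun z => ∑' n, ((dF β n * B ^ n : ℝ) : ℂ) * z ^ (2*n+1) := by
    funext z
    rw [gML, qML, ← tsum_mul_left]
    refine tsum_congr fun n => ?_
    have e : dF β n * B^n = qGamma q (γ+1) *
        ((-1) ^ n * σ ^ (2 * n) * q ^ (n * (n - 1)) / qGamma q (2 * n + γ + 1)) := by
      have : B^n ≠ 0 := by positivity
      simp only [dF, hβ]
      field_simp
    rw [e]
    push_cast
    ring
  obtain ⟨lo, hi⟩ := rad hg B hB _ hfun _ rfl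
  have hβ1 := hg.h1
  have hc0 := hg.hp 2
  have hc := hg.h2
  -- express the gammas
  have g3 : qGamma q (γ+3) = qGamma q (γ+1) * σ^2 / B := by
    have : β 1 = 1 := hβ1
    simp only [hβ] at this
    norm_num at this
    rw [show (2+γ+1) = γ+3 by ring] at this
    field_simp at this ⊢
    linarith
  have g5 : qGamma q (γ+5) = qGamma q (γ+1) * σ^4 * q^2 / (β 2 * B^2) := by
    have : β 2 = qGamma q (γ+1) * (σ^4*q^2/qGamma q (γ+5)) / B^2 := by
      simp only [hβ]
      norm_num
      rw [show (4+γ+1) = γ+5 by ring]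
    rw [this]
    field_simp
  refine ⟨lt_of_eq_of_lt ?_ lo, lt_of_le_of_lt hi ?_⟩
  · rw [g3]; field_simp
  · have hd : 0 < 9 - 10 * β 2 := by linarith
    have e : 3 * qGamma q (γ + 3) * qGamma q (γ + 5) /
        (σ ^ 2 * (9 * qGamma q (γ + 1) * qGamma q (γ + 5) -
          10 * q ^ 2 * qGamma q (γ + 3) ^ 2)) = (3 / (9 - 10*β 2)) / B := by
      have e2 : 9 * qGamma q (γ + 1) * qGamma q (γ + 5) - 10 * q ^ 2 * qGamma q (γ + 3) ^ 2
        = qGamma q (γ+1)^2 * σ^4 * q^2 / (β 2 * B^2) * (9 - 10*β 2) := by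
        rw [g3, g5]; field_simp
      rw [e2, g3, g5]
      have := hd.ne'
      have := hc0.ne'
      field_simp
    rw [e]
    refine div_lt_div_of_pos_right ?_ hB
    rw [lt_div_iff₀ hd]
    generalize β 2 = c at *
    have h3 : 0 < c^2 := by positivity
    have h4 : 0 < c^3 := by positivity
    nlinarith
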